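/- Fix a positive integer k and let R_k denote the number of chords in the k-core of the uniformly random chord diagram C_n of size n. Then n − R_k converges in distribution, as n→∞, to a Poisson random variable with mean k; that is, for every integer m ≥ 0, lim_{n→∞} P(n − R_k = m) = e^{−k} k^m / m!. -/

import Mathlib

open scoped Classical
open Finset Filter

/-- A chord diagram of size `n`: a fixed-point-free involution of the `2n`
endpoints `0, 1, …, 2n-1` (endpoint `i` here corresponds to the label `i+1`). -/
abbrev ChordDiagram (n : ℕ) :=
  {f : Fin (2*n) → Fin (2*n) // (∀ i, f (f i) = i) ∧ ∀ i, f i ≠ i}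

/-- `c` lies strictly between `a` and `b`. -/
def Between {m : ℕ} (a b c : Fin m) : Prop := min a b < c ∧ c < max a b

/-- The chord of `C` containing endpoint `x` crosses the chord containing endpoint `u`:
exactly one of the two endpoints `u`, `C u` lies strictly between `x` and `C x`. -/
def Crosses {n : ℕ} (C : ChordDiagram n) (x u : Fin (2*n)) : Prop :=
  Xor' (Between x (C.1 x) u) (Between x (C.1 x) (C.1 u))

/-- Uniform probability of an event over all chord diagrams of size `n`. -/
noncomputable def prob (n : ℕ) (E : ChordDiagram n → Prop) : ℝ :=
  ((Finset.univ.filter E).card : ℝ) / ((Finset.univ : Finset (ChordDiagram n)).card : ℝ)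

/-- The degree of the chord of `C` containing endpoint `x`: the number of chords
crossing it (each chord counted once via its smaller endpoint). -/
noncomputable def chordDegree {n : ℕ} (C : ChordDiagram n) (x : Fin (2*n)) : ℕ :=
  (Finset.univ.filter fun u => u < C.1 u ∧ Crosses C x u).card

/-- The length of the chord of `C` containing endpoint `x`: the number of endpoints
on the smaller of the two arcs it determines. -/
def chordLength {n : ℕ} (C : ChordDiagram n) (x : Fin (2*n)) : ℕ :=
  min (max (x:ℕ) (C.1 x : ℕ) - min (x:ℕ) (C.1 x : ℕ) - 1)
      (2*n - (max (x:ℕ) (C.1 x : ℕ) - min (x:ℕ) (C.1 x : ℕ)) - 1)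

/-- Degree of the chord containing endpoint `1` (index `0`). -/
noncomputable def degreeC1 (n : ℕ) (C : ChordDiagram n) : ℕ :=
  if h : 0 < n then chordDegree C ⟨0, by omega⟩ else 0

/-- Length of the chord containing endpoint `1` (index `0`). -/
noncomputable def lengthC1 (n : ℕ) (C : ChordDiagram n) : ℕ :=
  if h : 0 < n then chordLength C ⟨0, by omega⟩ else 0

/-- Membership in the component (w.r.t. the crossing relation) of the chord
containing the root endpoint. -/
def InRootComponent {n : ℕ} (C : ChordDiagram n) (root x : Fin (2*n)) : Prop :=
  x = root ∨ x = C.1 root ∨ Relation.ReflTransGen (fun a b => Crosses C a b) root x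

/-- The chord containing `x` is simple: it joins two (cyclically) consecutive endpoints. -/
def IsSimple {n : ℕ} (C : ChordDiagram n) (x : Fin (2*n)) : Prop :=
  (C.1 x : ℕ) = ((x : ℕ) + 1) % (2*n) ∨ (x : ℕ) = ((C.1 x : ℕ) + 1) % (2*n)

/-- `C` is monolithic (with respect to `root`): every chord not in the root
component is simple, and no two simple chords are next to each other. -/
def Monolithic {n : ℕ} (C : ChordDiagram n) (root : Fin (2*n)) : Prop :=
  (∀ x : Fin (2*n), ¬ InRootComponent C root x → IsSimple C x) ∧
  ¬ ∃ i : Fin (2*n), (C.1 i : ℕ) = ((i : ℕ) + 1) % (2*n) ∧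
      ∃ j : Fin (2*n), (j : ℕ) = ((i : ℕ) + 2) % (2*n) ∧ (C.1 j : ℕ) = ((i : ℕ) + 3) % (2*n)

/-- `L_j`: the number of chords of length `j` in `C`. -/
noncomputable def lengthCount (n : ℕ) (j : ℕ) (C : ChordDiagram n) : ℕ :=
  (Finset.univ.filter fun x : Fin (2*n) => x < C.1 x ∧ chordLength C x = j).card

/-- The endpoints of chords of `C` of length at least `k`. -/
noncomputable def lenAtLeast (n k : ℕ) (C : ChordDiagram n) : Finset (Fin (2*n)) :=
  Finset.univ.filter fun x => k ≤ chordLength C x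

/-- The number of chords with endpoints in `S` crossing the chord containing `x`. -/
noncomputable def degreeIn {n : ℕ} (C : ChordDiagram n) (S : Finset (Fin (2*n)))
    (x : Fin (2*n)) : ℕ :=
  (S.filter fun u => u < C.1 u ∧ Crosses C x u).card

/-- `S` (a chord-closed set of endpoints) is a set of chords each crossing at
least `k` other chords of `S`. -/
def IsCore {n : ℕ} (C : ChordDiagram n) (k : ℕ) (S : Finset (Fin (2*n))) : Prop :=
  (∀ x ∈ S, C.1 x ∈ S) ∧ ∀ x ∈ S, k ≤ degreeIn C S x

/-- The `k`-core: the union of all sets of chords in which every chord crosses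
at least `k` other chords of the set. -/
noncomputable def kCore (n k : ℕ) (C : ChordDiagram n) : Finset (Fin (2*n)) :=
  Finset.univ.filter fun x => ∃ S : Finset (Fin (2*n)), IsCore C k S ∧ x ∈ S

/-- The number of chords in the `k`-core of `C`. -/
noncomputable def kCoreSize (n k : ℕ) (C : ChordDiagram n) : ℕ :=
  ((kCore n k C).filter fun x => x < C.1 x).card

/-- `Z_k`: the number of chords of length strictly less than `k`. -/
noncomputable def shortCount (n k : ℕ) (C : ChordDiagram n) : ℕ :=
  (Finset.univ.filter fun x : Fin (2*n) => x < C.1 x ∧ chordLength C x < k).card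

/-- `C` contains a balanced clique of size `m`: a set of `m` pairwise crossing
chords with exactly one endpoint in each of the `2m` blocks of length `⌊n/m⌋`. -/
def HasBalancedClique (n m : ℕ) (C : ChordDiagram n) : Prop :=
  ∃ S : Finset (Fin (2*n)),
    (∀ x ∈ S, C.1 x ∈ S) ∧
    (∀ x ∈ S, ∀ u ∈ S, u ≠ x → u ≠ C.1 x → Crosses C x u) ∧
    (∀ t : ℕ, 1 ≤ t → t ≤ 2*m →
      (S.filter fun x => (t-1) * (n/m) ≤ (x:ℕ) ∧ (x:ℕ) < t * (n/m)).card = 1)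

/-- An oriented chord diagram: a chord diagram together with auxiliary fair-coin
bits; the bit attached to a crossing pair of chords (indexed by their smaller
endpoints) decides which chord over-crosses the other. -/
abbrev OrientedChordDiagram (n : ℕ) := ChordDiagram n × (Fin (2*n) → Fin (2*n) → Bool)

/-- The smaller endpoint of the chord of `C` containing `x`. -/
def chordRep {n : ℕ} (C : ChordDiagram n) (x : Fin (2*n)) : Fin (2*n) := min x (C.1 x)

/-- In the oriented diagram `D`, the chord containing `x` crosses and
over-crosses the chord containing `u`. -/
def OverD {n : ℕ} (D : OrientedChordDiagram n) (x u : Fin (2*n)) : Prop :=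
  Crosses D.1 x u ∧
    ((chordRep D.1 x ≤ chordRep D.1 u ∧ D.2 (chordRep D.1 x) (chordRep D.1 u) = true) ∨
     (chordRep D.1 u < chordRep D.1 x ∧ D.2 (chordRep D.1 u) (chordRep D.1 x) = false))

/-- Uniform probability of an event over all oriented chord diagrams of size `n`
(this yields a uniformly random diagram with each crossing oriented by an
independent fair coin). -/
noncomputable def probD (n : ℕ) (E : OrientedChordDiagram n → Prop) : ℝ :=
  ((Finset.univ.filter E).card : ℝ) /
    ((Finset.univ : Finset (OrientedChordDiagram n)).card : ℝ)

/-- The chords (given by their endpoints in `S`) are strongly connected in the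
directed intersection graph of `D`, using only chords of `S`. -/
def StronglyConnectedIn {n : ℕ} (D : OrientedChordDiagram n) (S : Set (Fin (2*n))) : Prop :=
  ∀ c ∈ S, ∀ d ∈ S,
    Relation.ReflTransGen (fun a b => a ∈ S ∧ b ∈ S ∧ OverD D a b) c d

/-- The number of chords with both endpoints in the cyclic block
`{i, i+1, …, i+t-1}` (mod `2n`). -/
noncomputable def chordsInBlock (n : ℕ) (C : ChordDiagram n) (i t : ℕ) : ℕ :=
  (Finset.univ.filter fun x : Fin (2*n) => x < C.1 x ∧
    (∃ a < t, (x:ℕ) = (i + a) % (2*n)) ∧ (∃ a < t, ((C.1 x : ℕ)) = (i + a) % (2*n))).card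

/-- The chord of `x` reaches the chord of `u` in the directed intersection graph
(of the whole diagram); endpoints of the same chord represent the same vertex. -/
def ReachChord {n : ℕ} (D : OrientedChordDiagram n) (x u : Fin (2*n)) : Prop :=
  u = x ∨ u = D.1.1 x ∨ Relation.ReflTransGen (fun a b => OverD D a b) x u

/-- The chords of `x` and `u` lie in the same strong component. -/
def MutualReach {n : ℕ} (D : OrientedChordDiagram n) (x u : Fin (2*n)) : Prop :=
  ReachChord D x u ∧ ReachChord D u x

/-- The number of single-chord strong components of `D`. -/
noncomputable def singleCount (n : ℕ) (D : OrientedChordDiagram n) : ℕ :=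
  (Finset.univ.filter fun x : Fin (2*n) =>
    x < D.1.1 x ∧ ∀ u : Fin (2*n), u ≠ x → u ≠ D.1.1 x → ¬ MutualReach D x u).card

/-!
A chord of length less than `k` crosses fewer than `k` chords, so it never lies in the `k`-core.
If the other chords do not form the `k`-core, one of them crosses fewer than `k` of the others, and
then nearly all points of one of its two arcs are matched among themselves: up to `O(k)` points, an
arc is a union of chords. A given set of `2b` endpoints is a union of chords with probability at
most `1 / (n.choose b)`, and summing over all such sets shows that this has probability `O(1/n)`.
So, outside an event of probability `O(1/n)`, the difference `n - R_k` is the number `Z` of chords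
of length less than `k`.

For the law of `Z`, take one of the `2nk` pairs `x, y` at clockwise distance at most `k`, join `x`
to `y`, and join their former partners to each other. This turns a uniform diagram into a uniform
diagram conditioned to contain the chord `xy`, and raises `Z` by exactly one outside an event of
probability `O(1/n)`. Averaging over the pairs gives
`(m + 1) P(Z = m + 1) = k P(Z = m) + O(1/n)`, and this recurrence together with the tightness of `Z`
determines the Poisson limit.
-/

open scoped BigOperators

section Circle

variable {N : ℕ}

/-- The clockwise distance from `x` to `y` on a circle of `N` points. -/
def cwDist (x y : Fin N) : ℕ := (y - x : Fin N)

/-- The clockwise arc of the points at clockwise distance at most `ℓ` from `x`; it has `ℓ + 1`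
points unless it wraps around the whole circle. -/
def cwArc (x : Fin N) (ℓ : ℕ) : Finset (Fin N) := {z | cwDist x z ≤ ℓ}

theorem cwDist_eq_ite (x y : Fin N) :
    cwDist x y = if (x : ℕ) ≤ y then (y : ℕ) - x else N + y - x := by
  have hx := x.isLt
  have hy := y.isLt
  rw [cwDist, Fin.val_sub]
  split_ifs with h
  · rw [show N - x + y = y - x + N by omega, Nat.add_mod_right, Nat.mod_eq_of_lt (by omega)]
  · rw [Nat.mod_eq_of_lt (by omega)]
    omega

theorem cwDist_lt (x y : Fin N) : cwDist x y < N := Fin.isLt _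

@[simp]
theorem cwDist_self (x : Fin N) : cwDist x x = 0 := by simp [cwDist_eq_ite]

theorem cwDist_add_cwDist {x y : Fin N} (h : x ≠ y) : cwDist x y + cwDist y x = N := by
  have := x.isLt
  have := y.isLt
  have := Fin.val_ne_of_ne h
  simp only [cwDist_eq_ite]
  split_ifs <;> omega

theorem cwDist_pos {x y : Fin N} (h : x ≠ y) : 0 < cwDist x y := by
  have := cwDist_add_cwDist h
  have := cwDist_lt y x
  omega

theorem cwDist_right_injective (x : Fin N) : Function.Injective (cwDist x) := by
  intro y z h
  have := y.isLt
  have := z.isLt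
  apply Fin.ext
  simp only [cwDist_eq_ite] at h
  split_ifs at h <;> omega

theorem cwDist_triangle (x y z : Fin N) :
    cwDist x z = cwDist x y + cwDist y z ∨ cwDist x z + N = cwDist x y + cwDist y z := by
  have := x.isLt
  have := y.isLt
  have := z.isLt
  simp only [cwDist_eq_ite]
  split_ifs <;> omega

theorem exists_cwDist_left_eq (x : Fin N) {j : ℕ} (hj : j < N) : ∃ y, cwDist y x = j := by
  have : NeZero N := ⟨by omega⟩
  refine ⟨x - Fin.ofNat N j, ?_⟩
  rw [cwDist, sub_sub_cancel]
  exact Nat.mod_eq_of_lt hj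

theorem image_cwDist_univ (x : Fin N) : univ.image (cwDist x) = range N := by
  refine eq_of_subset_of_card_le ?_ ?_
  · simp only [subset_iff, mem_image, mem_univ, true_and, mem_range, forall_exists_index,
      forall_apply_eq_imp_iff]
    exact cwDist_lt x
  · simp [card_image_of_injective _ (cwDist_right_injective x)]

theorem card_filter_cwDist_mem (x : Fin N) {s : Finset ℕ} (hs : s ⊆ range N) :
    #{z | cwDist x z ∈ s} = #s := by
  rw [← card_image_of_injective _ (cwDist_right_injective x)]
  congr 1
  rw [← image_cwDist_univ x] at hs
  ext j
  simp only [mem_image, mem_filter, mem_univ, true_and]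
  refine ⟨?_, fun hj => ?_⟩
  · rintro ⟨z, hz, rfl⟩
    exact hz
  · obtain ⟨z, -, rfl⟩ := mem_image.1 (hs hj)
    exact ⟨z, hj, rfl⟩

theorem sbtw_iff_cwDist {x y z : Fin N} :
    sbtw x y z ↔ 0 < cwDist x y ∧ cwDist x y < cwDist x z := by
  have := x.isLt
  have := y.isLt
  have := z.isLt
  simp only [Fin.sbtw_iff, cwDist_eq_ite, Fin.lt_def]
  split_ifs <;> omega

theorem mem_cwArc {x z : Fin N} {ℓ : ℕ} : z ∈ cwArc x ℓ ↔ cwDist x z ≤ ℓ := by simp [cwArc]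

theorem card_cwArc (x : Fin N) {ℓ : ℕ} (hℓ : ℓ < N) : #(cwArc x ℓ) = ℓ + 1 := by
  rw [← card_range (ℓ + 1), ← card_filter_cwDist_mem x (range_subset_range.2 hℓ)]
  simp [cwArc]

end Circle

/-- A set of endpoints is closed for the chord diagram `C` if it is a union of chords. -/
def ChordClosed {n : ℕ} (C : ChordDiagram n) (B : Finset (Fin (2 * n))) : Prop :=
  ∀ x ∈ B, C.1 x ∈ B

namespace ChordDiagram

variable {n k : ℕ} (C : ChordDiagram n)

theorem involutive : Function.Involutive C.1 := C.2.1

@[simp]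
theorem apply_apply (x : Fin (2 * n)) : C.1 (C.1 x) = x := C.2.1 x

theorem apply_ne (x : Fin (2 * n)) : C.1 x ≠ x := C.2.2 x

variable {C}

theorem union_image_eq_of_xor {T W : Finset (Fin (2 * n))} (hT : ChordClosed C T) (hWT : W ⊆ T)
    (hW : ∀ x ∈ T, Xor (x ∈ W) (C.1 x ∈ W)) : W ∪ W.image C.1 = T := by
  refine subset_antisymm (union_subset hWT (image_subset_iff.2 fun x hx => hT x (hWT hx))) ?_
  intro x hx
  rcases hW x hx with h | h
  · exact mem_union_left _ h.1
  · exact mem_union_right _ (mem_image.2 ⟨C.1 x, h.1, C.apply_apply x⟩)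

theorem two_mul_card_of_xor {T W : Finset (Fin (2 * n))} (hT : ChordClosed C T) (hWT : W ⊆ T)
    (hW : ∀ x ∈ T, Xor (x ∈ W) (C.1 x ∈ W)) : 2 * #W = #T := by
  have hdisj : Disjoint W (W.image C.1) := by
    rw [disjoint_left]
    intro x hx hx'
    obtain ⟨y, hy, rfl⟩ := mem_image.1 hx'
    exact (xor_iff_not_iff _ _).1 (hW y (hWT hy)) ⟨fun _ => hx, fun _ => hy⟩
  rw [← union_image_eq_of_xor hT hWT hW, card_union_of_disjoint hdisj,
    card_image_of_injective _ C.involutive.injective, two_mul]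

theorem xor_mem_filter_lt {T : Finset (Fin (2 * n))} (hT : ChordClosed C T) :
    ∀ x ∈ T, Xor (x ∈ {x ∈ T | x < C.1 x}) (C.1 x ∈ {x ∈ T | x < C.1 x}) := by
  intro x hx
  have := C.apply_ne x
  simp only [mem_filter, hx, hT x hx, true_and, apply_apply, xor_iff_not_iff]
  grind

theorem two_mul_card_filter_lt {T : Finset (Fin (2 * n))} (hT : ChordClosed C T) :
    2 * #{x ∈ T | x < C.1 x} = #T :=
  two_mul_card_of_xor hT (filter_subset _ _) (xor_mem_filter_lt hT)

theorem chordClosed_compl {B : Finset (Fin (2 * n))} (hB : ChordClosed C B) :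
    ChordClosed C Bᶜ := fun x hx => by
  simp only [mem_compl] at hx ⊢
  exact fun h => hx (C.apply_apply x ▸ hB _ h)

variable (C)

theorem crosses_iff (x u : Fin (2 * n)) :
    Crosses C x u ↔ Xor (sbtw x u (C.1 x)) (sbtw x (C.1 u) (C.1 x)) := by
  have hx := C.apply_ne x
  have hxu : C.1 u = x ↔ u = C.1 x := by rw [C.involutive.eq_iff, eq_comm]
  have hxu' : C.1 u = C.1 x ↔ u = x := C.involutive.injective.eq_iff
  change Xor (Between x (C.1 x) u) (Between x (C.1 x) (C.1 u)) ↔ _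
  unfold Between
  generalize C.1 u = v at *
  generalize C.1 x = y at *
  simp only [Fin.ext_iff, Fin.lt_def, Fin.coe_min, Fin.coe_max, ne_eq, Xor, Fin.sbtw_iff] at *
  rcases lt_or_ge (x : ℕ) y with h | h
  · rw [min_eq_left h.le, max_eq_right h.le]
    omega
  · rw [min_eq_right h, max_eq_left h]
    omega

theorem crosses_apply_left (x u : Fin (2 * n)) : Crosses C (C.1 x) u ↔ Crosses C x u := by
  simp only [Crosses, Between, apply_apply, min_comm, max_comm]

theorem crosses_apply_right (x u : Fin (2 * n)) : Crosses C x (C.1 u) ↔ Crosses C x u := by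
  rw [crosses_iff, crosses_iff, apply_apply, xor_comm]

theorem degreeIn_apply (S : Finset (Fin (2 * n))) (x : Fin (2 * n)) :
    degreeIn C S (C.1 x) = degreeIn C S x := by
  simp only [degreeIn, crosses_apply_left]

variable {C}

theorem degreeIn_eq_card_sbtw {S : Finset (Fin (2 * n))} (hS : ChordClosed C S)
    (x : Fin (2 * n)) :
    degreeIn C S x = #{u ∈ S | sbtw x u (C.1 x) ∧ ¬ sbtw x (C.1 u) (C.1 x)} := by
  set T : Finset (Fin (2 * n)) := {u ∈ S | Crosses C x u} with hT
  have hclosed : ChordClosed C T := by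
    intro u hu
    simp only [hT, mem_filter, crosses_apply_right] at hu ⊢
    exact ⟨hS u hu.1, hu.2⟩
  have hsub : {u ∈ S | sbtw x u (C.1 x) ∧ ¬ sbtw x (C.1 u) (C.1 x)} ⊆ T :=
    monotone_filter_right S fun u _ hu => (C.crosses_iff x u).2 (Or.inl hu)
  have hlt := two_mul_card_filter_lt hclosed
  have hside := two_mul_card_of_xor hclosed hsub fun u hu => by
    simp only [hT, mem_filter, crosses_iff] at hu
    simpa only [mem_filter, hu.1, hS u hu.1, true_and, apply_apply, Xor, not_and, not_not]
      using (by have := hu.2; simp only [Xor] at this; tauto)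
  rw [degreeIn, ← Nat.mul_right_inj two_ne_zero, hside, ← hlt, hT, filter_filter]
  simp only [and_comm]

variable (C)

theorem chordLength_eq (x : Fin (2 * n)) :
    chordLength C x = min (cwDist x (C.1 x)) (cwDist (C.1 x) x) - 1 := by
  have := C.apply_ne x
  rw [ne_eq, Fin.ext_iff] at this
  simp only [chordLength, cwDist_eq_ite]
  split_ifs <;> omega

theorem mem_lenAtLeast {x : Fin (2 * n)} :
    x ∈ lenAtLeast n k C ↔ k < cwDist x (C.1 x) ∧ k < cwDist (C.1 x) x := by
  have := cwDist_pos (C.apply_ne x)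
  have := cwDist_pos (C.apply_ne x).symm
  simp only [lenAtLeast, mem_filter, mem_univ, true_and, chordLength_eq]
  omega

theorem apply_mem_lenAtLeast {x : Fin (2 * n)} :
    C.1 x ∈ lenAtLeast n k C ↔ x ∈ lenAtLeast n k C := by
  rw [mem_lenAtLeast, mem_lenAtLeast, apply_apply, and_comm]

theorem chordClosed_lenAtLeast (k : ℕ) : ChordClosed C (lenAtLeast n k C) := fun _ hx =>
  C.apply_mem_lenAtLeast.2 hx

theorem two_mul_shortCount (k : ℕ) : 2 * shortCount n k C = #(lenAtLeast n k C)ᶜ := by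
  rw [← two_mul_card_filter_lt (chordClosed_compl (C.chordClosed_lenAtLeast k)), shortCount]
  congr 2
  ext x
  simp [lenAtLeast, and_comm]

theorem shortCount_eq_card (hk : k < n) : shortCount n k C = #{x | cwDist x (C.1 x) ≤ k} := by
  rw [← Nat.mul_right_inj two_ne_zero, two_mul_shortCount,
    ← two_mul_card_of_xor (chordClosed_compl (C.chordClosed_lenAtLeast k))]
  · intro x
    simp only [mem_filter, mem_univ, true_and, mem_compl, mem_lenAtLeast]
    omega
  · intro x hx
    have := cwDist_add_cwDist (C.apply_ne x)
    simp only [mem_filter, mem_univ, true_and, mem_compl, mem_lenAtLeast, apply_apply, Xor] at hx ⊢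
    omega

variable {C}

theorem degreeIn_le_cwDist_sub_one {S : Finset (Fin (2 * n))} (hS : ChordClosed C S)
    (x : Fin (2 * n)) : degreeIn C S x ≤ cwDist x (C.1 x) - 1 := by
  have hIoo : Ioo 0 (cwDist x (C.1 x)) ⊆ range (2 * n) := fun j hj =>
    mem_range.2 ((mem_Ioo.1 hj).2.trans (cwDist_lt _ _))
  calc degreeIn C S x ≤ #{u | cwDist x u ∈ Ioo 0 (cwDist x (C.1 x))} := by
        rw [degreeIn_eq_card_sbtw hS]
        refine card_le_card fun u hu => ?_
        simpa only [mem_filter, mem_univ, true_and, mem_Ioo, sbtw_iff_cwDist] using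
          (mem_filter.1 hu).2.1
    _ = cwDist x (C.1 x) - 1 := by rw [card_filter_cwDist_mem x hIoo, Nat.card_Ioo, Nat.sub_zero]

theorem degreeIn_le_chordLength {S : Finset (Fin (2 * n))} (hS : ChordClosed C S)
    (x : Fin (2 * n)) : degreeIn C S x ≤ chordLength C x := by
  have hx := degreeIn_le_cwDist_sub_one hS x
  have hCx := degreeIn_le_cwDist_sub_one hS (C.1 x)
  rw [degreeIn_apply, apply_apply] at hCx
  rw [chordLength_eq]
  omega

theorem subset_lenAtLeast_of_isCore {S : Finset (Fin (2 * n))} (hS : IsCore C k S) :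
    S ⊆ lenAtLeast n k C := fun x hx => by
  simpa [lenAtLeast] using (hS.2 x hx).trans (degreeIn_le_chordLength hS.1 x)

theorem kCoreSize_add_shortCount (h : IsCore C k (lenAtLeast n k C)) :
    kCoreSize n k C + shortCount n k C = n := by
  have hcore : kCore n k C = lenAtLeast n k C := by
    ext x
    simp only [kCore, mem_filter, mem_univ, true_and]
    exact ⟨fun ⟨S, hS, hx⟩ => subset_lenAtLeast_of_isCore hS hx, fun hx => ⟨_, h, hx⟩⟩
  have hshort := C.two_mul_shortCount k
  have hlong := two_mul_card_filter_lt (C.chordClosed_lenAtLeast k)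
  rw [card_compl, Fintype.card_fin] at hshort
  have := card_le_univ (lenAtLeast n k C)
  rw [Fintype.card_fin] at this
  rw [kCoreSize, hcore]
  omega

end ChordDiagram

/-- The sets of endpoints that fill a clockwise arc of length `ℓ ∈ (3k, n + 2k]` up to fewer than
`3k` points. One of them is closed for every diagram whose chords of length at least `k` do not
form the `k`-core. -/
noncomputable def nearArcs (n k : ℕ) : Finset (Finset (Fin (2 * n))) :=
  {B | ∃ y ℓ, 3 * k < ℓ ∧ ℓ ≤ n + 2 * k ∧ B ⊆ cwArc y ℓ ∧ #(cwArc y ℓ \ B) < 3 * k}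

namespace ChordDiagram

variable {n : ℕ} (C : ChordDiagram n) (k : ℕ)

/-- The endpoints of the chords that meet the clockwise arc from `x` to `C x`, without the chords
of length at least `k` that cross the chord of `x`. -/
noncomputable def arcResidue (x : Fin (2 * n)) : Finset (Fin (2 * n)) :=
  {u | (cwDist x u ≤ cwDist x (C.1 x) ∨ cwDist x (C.1 u) ≤ cwDist x (C.1 x)) ∧
    ¬ (u ∈ lenAtLeast n k C ∧ Crosses C x u)}

variable {k}

theorem chordClosed_arcResidue (x : Fin (2 * n)) : ChordClosed C (arcResidue C k x) := by
  intro u hu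
  simpa only [arcResidue, mem_filter, mem_univ, true_and, apply_apply, apply_mem_lenAtLeast,
    crosses_apply_right, or_comm] using hu

theorem sbtw_or_eq_of_cwDist_le {x u : Fin (2 * n)} (hu : cwDist x u ≤ cwDist x (C.1 x)) :
    sbtw x u (C.1 x) ∨ u = x ∨ u = C.1 x := by
  rcases (cwDist x u).eq_zero_or_pos with h0 | hpos
  · exact Or.inr (Or.inl (cwDist_right_injective x (h0.trans (cwDist_self x).symm)))
  · rcases hu.lt_or_eq with hlt | heq
    · exact Or.inl (sbtw_iff_cwDist.2 ⟨hpos, hlt⟩)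
    · exact Or.inr (Or.inr (cwDist_right_injective x heq))

theorem card_cwArc_sdiff_arcResidue_le (x : Fin (2 * n)) :
    #(cwArc x (cwDist x (C.1 x)) \ arcResidue C k x) ≤ degreeIn C (lenAtLeast n k C) x := by
  rw [degreeIn_eq_card_sbtw (C.chordClosed_lenAtLeast k)]
  refine card_le_card fun u hu => ?_
  simp only [Finset.mem_sdiff, mem_cwArc, arcResidue, mem_filter, mem_univ, true_and,
    not_and_not_right] at hu ⊢
  obtain ⟨harc, hcross⟩ := hu
  obtain ⟨hlong, hcross⟩ := hcross (Or.inl harc)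
  refine ⟨hlong, ((C.crosses_iff x u).1 hcross).resolve_right fun ⟨hCu, hu⟩ => ?_⟩
  rcases C.sbtw_or_eq_of_cwDist_le harc with h | rfl | rfl
  · exact hu h
  · exact sbtw_irrefl_right hCu
  · rw [apply_apply] at hCu
    exact sbtw_irrefl_left hCu

theorem arcResidue_subset_cwArc {x y : Fin (2 * n)} (hy : cwDist y x = k) :
    arcResidue C k x ⊆ cwArc y (cwDist x (C.1 x) + 2 * k) := by
  intro u hu
  rw [mem_cwArc]
  have hyxu := cwDist_triangle y x u
  by_cases harc : cwDist x u ≤ cwDist x (C.1 x)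
  · omega
  simp only [arcResidue, mem_filter, mem_univ, true_and, harc, false_or, not_and] at hu
  obtain ⟨hCu, hcross⟩ := hu
  have hshort : u ∉ lenAtLeast n k C := fun hlong => hcross hlong <| by
    refine (C.crosses_iff x u).2 (Or.inr ⟨?_, fun h => harc (sbtw_iff_cwDist.1 h).2.le⟩)
    refine (C.sbtw_or_eq_of_cwDist_le hCu).resolve_right ?_
    rintro (h | h)
    · exact harc (by rw [← h, apply_apply])
    · exact harc (by rw [C.involutive.injective h, cwDist_self]; exact zero_le)
  have := cwDist_triangle x u (C.1 u)
  have := cwDist_triangle x (C.1 u) u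
  have := cwDist_lt y u
  rw [mem_lenAtLeast] at hshort
  omega

theorem arcResidue_mem_nearArcs (hn : 2 * k < n) {x : Fin (2 * n)} (hx : x ∈ lenAtLeast n k C)
    (hside : cwDist x (C.1 x) ≤ n) (hdeg : degreeIn C (lenAtLeast n k C) x < k) :
    arcResidue C k x ∈ nearArcs n k := by
  obtain ⟨y, hy⟩ := exists_cwDist_left_eq x (show k < 2 * n by omega)
  have hlong := (C.mem_lenAtLeast.1 hx).1
  have hinner := C.card_cwArc_sdiff_arcResidue_le (k := k) x
  set d := cwDist x (C.1 x)
  have hsub : cwArc x d ⊆ cwArc y (d + 2 * k) := fun u hu => by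
    have := cwDist_triangle y x u
    rw [mem_cwArc] at hu ⊢
    omega
  have hends : #(cwArc y (d + 2 * k) \ cwArc x d) = 2 * k := by
    rw [card_sdiff_of_subset hsub, card_cwArc _ (by omega), card_cwArc _ (by omega)]
    omega
  have hmiss : #(cwArc y (d + 2 * k) \ arcResidue C k x) < 3 * k := by
    have := (card_le_card (sdiff_triangle _ (cwArc x d) _)).trans (card_union_le
      (cwArc y (d + 2 * k) \ cwArc x d) (cwArc x d \ arcResidue C k x))
    omega
  simp only [nearArcs, mem_filter, mem_univ, true_and]
  exact ⟨y, d + 2 * k, by omega, by omega, C.arcResidue_subset_cwArc hy, hmiss⟩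

variable {C}

theorem isCore_lenAtLeast (hn : 2 * k < n) (h : ∀ B ∈ nearArcs n k, ¬ ChordClosed C B) :
    IsCore C k (lenAtLeast n k C) := by
  refine ⟨C.chordClosed_lenAtLeast k, fun x hx => ?_⟩
  by_contra! hdeg
  have := cwDist_add_cwDist (C.apply_ne x)
  rcases le_total (cwDist x (C.1 x)) n with hside | hside
  · exact h _ (C.arcResidue_mem_nearArcs hn hx hside hdeg) (C.chordClosed_arcResidue x)
  · refine h _ (C.arcResidue_mem_nearArcs hn (C.chordClosed_lenAtLeast k x hx) ?_ ?_)
      (C.chordClosed_arcResidue (C.1 x))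
    · rw [apply_apply]
      omega
    · rwa [degreeIn_apply]

end ChordDiagram

section Probability

variable {n : ℕ} {E F G : ChordDiagram n → Prop}

instance : Nonempty (ChordDiagram n) :=
  ⟨⟨Fin.rev, Fin.rev_rev, fun i h => by
    have := congrArg Fin.val h
    rw [Fin.val_rev] at this
    omega⟩⟩

theorem prob_eq_expect (E : ChordDiagram n → Prop) :
    prob n E = 𝔼 C : ChordDiagram n, if E C then (1 : ℝ) else 0 := by
  rw [prob, Fintype.expect_eq_sum_div_card, sum_boole, card_univ]

theorem prob_nonneg (E : ChordDiagram n → Prop) : 0 ≤ prob n E := by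
  unfold prob
  positivity

theorem prob_mono (h : ∀ C, E C → F C) : prob n E ≤ prob n F := by
  unfold prob
  gcongr
  exact h _

theorem sum_prob {ι : Type*} (s : Finset ι) (E : ι → ChordDiagram n → Prop) :
    ∑ i ∈ s, prob n (E i) = 𝔼 C : ChordDiagram n, (#{i ∈ s | E i C} : ℝ) := by
  simp only [prob_eq_expect, ← expect_sum_comm, sum_boole]

theorem prob_le_one (E : ChordDiagram n → Prop) : prob n E ≤ 1 := by
  rw [prob_eq_expect, ← Fintype.expect_one (ι := ChordDiagram n)]
  exact expect_le_expect fun C _ => by split_ifs <;> norm_num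

theorem prob_or_le (E F : ChordDiagram n → Prop) :
    prob n (fun C => E C ∨ F C) ≤ prob n E + prob n F := by
  simp only [prob_eq_expect, ← expect_add_distrib]
  refine expect_le_expect fun C _ => ?_
  by_cases hE : E C <;> by_cases hF : F C <;> norm_num [hE, hF]

theorem abs_prob_sub_prob_le (h : ∀ C, ¬ F C → (E C ↔ G C)) :
    |prob n E - prob n G| ≤ prob n F := by
  have hle {E G : ChordDiagram n → Prop} (h : ∀ C, ¬ F C → (E C ↔ G C)) :
      prob n E ≤ prob n F + prob n G :=
    (prob_mono fun C hC => or_iff_not_imp_left.2 fun hF => (h C hF).1 hC).trans (prob_or_le F G)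
  rw [abs_sub_le_iff, sub_le_iff_le_add, sub_le_iff_le_add]
  exact ⟨hle h, hle fun C hF => (h C hF).symm⟩

theorem prob_exists_mem_le {ι : Type*} (s : Finset ι) (E : ι → ChordDiagram n → Prop) {c : ℝ}
    (h : ∀ i ∈ s, prob n (E i) ≤ c) : prob n (fun C => ∃ i ∈ s, E i C) ≤ #s * c := by
  calc prob n (fun C => ∃ i ∈ s, E i C) ≤ 𝔼 C : ChordDiagram n, (#{i ∈ s | E i C} : ℝ) := by
        rw [prob_eq_expect]
        refine expect_le_expect fun C _ => ?_
        split_ifs with hC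
        · obtain ⟨i, hi, hE⟩ := hC
          exact_mod_cast card_pos.2 ⟨i, mem_filter.2 ⟨hi, hE⟩⟩
        · positivity
    _ = ∑ i ∈ s, prob n (E i) := (sum_prob s E).symm
    _ ≤ #s * c := by simpa using sum_le_card_nsmul s _ c h

end Probability

namespace ChordDiagram

variable {n : ℕ}

/-- The relabelling of a chord diagram by a permutation of its endpoints. -/
def conj (σ : Equiv.Perm (Fin (2 * n))) : ChordDiagram n ≃ ChordDiagram n :=
  σ.conj.subtypeEquiv fun f =>
    and_congr (σ.forall_congr fun i => by simp) (σ.forall_congr fun i => by simp)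

theorem conj_apply (σ : Equiv.Perm (Fin (2 * n))) (C : ChordDiagram n) (x : Fin (2 * n)) :
    (conj σ C).1 x = σ (C.1 (σ.symm x)) := rfl

theorem prob_conj (σ : Equiv.Perm (Fin (2 * n))) (E : ChordDiagram n → Prop) :
    prob n (fun C => E (conj σ C)) = prob n E := by
  rw [prob_eq_expect, prob_eq_expect]
  exact Fintype.expect_equiv (conj σ) _ _ fun _ => rfl

end ChordDiagram

section ChordClosed

variable {n : ℕ}

theorem prob_chordClosed_eq_of_card_eq {B B' : Finset (Fin (2 * n))} (h : #B = #B') :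
    prob n (ChordClosed · B) = prob n (ChordClosed · B') := by
  let e := equivOfCardEq h
  have hσ (x : Fin (2 * n)) : e.extendSubtype x ∈ B' ↔ x ∈ B :=
    ⟨not_imp_not.1 (e.extendSubtype_not_mem x), e.extendSubtype_mem x⟩
  rw [← ChordDiagram.prob_conj e.extendSubtype (ChordClosed · B')]
  congr 1
  ext C
  refine e.extendSubtype.forall_congr fun x => ?_
  rw [ChordDiagram.conj_apply, Equiv.symm_apply_apply, hσ, hσ]

theorem card_filter_chordClosed_le (C : ChordDiagram n) (b : ℕ) :
    #{B ∈ powersetCard (2 * b) univ | ChordClosed C B} ≤ n.choose b := by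
  have hhalf {B : Finset (Fin (2 * n))} (hB : ChordClosed C B) :=
    ChordDiagram.union_image_eq_of_xor hB (filter_subset _ _) (ChordDiagram.xor_mem_filter_lt hB)
  calc #{B ∈ powersetCard (2 * b) univ | ChordClosed C B}
      ≤ #(powersetCard b {x | x < C.1 x}) := by
        refine card_le_card_of_injOn (fun B => {x ∈ B | x < C.1 x}) (fun B hB => ?_) ?_
        · obtain ⟨hcard, hclosed⟩ := mem_filter.1 (mem_coe.1 hB)
          have := ChordDiagram.two_mul_card_filter_lt hclosed
          rw [(mem_powersetCard.1 hcard).2, Nat.mul_right_inj two_ne_zero] at this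
          exact mem_powersetCard.2 ⟨filter_subset_filter _ (subset_univ _), this⟩
        · intro B hB D hD h
          rw [← hhalf (mem_filter.1 hB).2, ← hhalf (mem_filter.1 hD).2]
          exact congrArg (fun W => W ∪ W.image C.1) h
    _ = n.choose b := by
        have := ChordDiagram.two_mul_card_filter_lt (C := C) (T := univ) fun _ _ => mem_univ _
        rw [card_univ, Fintype.card_fin, Nat.mul_right_inj two_ne_zero] at this
        rw [card_powersetCard, this]

theorem choose_mul_self_le (n b : ℕ) : n.choose b * n.choose b ≤ (2 * n).choose (2 * b) := by
  rw [two_mul n, two_mul b, Nat.add_choose_eq]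
  exact single_le_sum (f := fun ij : ℕ × ℕ => n.choose ij.1 * n.choose ij.2)
    (fun _ _ => zero_le) (a := (b, b)) (by simp)

theorem prob_chordClosed_le {b : ℕ} {B : Finset (Fin (2 * n))} (hB : #B = 2 * b) :
    prob n (ChordClosed · B) ≤ 1 / n.choose b := by
  have hb : b ≤ n := by
    have := card_le_univ B
    rw [Fintype.card_fin] at this
    omega
  have hpos : (0 : ℝ) < n.choose b := by exact_mod_cast Nat.choose_pos hb
  have hdouble : (2 * n).choose (2 * b) * prob n (ChordClosed · B) ≤ n.choose b := by
    calc (2 * n).choose (2 * b) * prob n (ChordClosed · B)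
        = ∑ B' ∈ powersetCard (2 * b) univ, prob n (ChordClosed · B') := by
          rw [sum_congr rfl fun B' hB' => prob_chordClosed_eq_of_card_eq
            ((mem_powersetCard.1 hB').2.trans hB.symm)]
          simp
      _ = 𝔼 C : ChordDiagram n, (#{B' ∈ powersetCard (2 * b) univ | ChordClosed C B'} : ℝ) :=
          sum_prob _ fun B' C => ChordClosed C B'
      _ ≤ n.choose b := by
          rw [← Fintype.expect_const (ι := ChordDiagram n) (n.choose b : ℝ)]
          exact expect_le_expect fun C _ => Nat.cast_le.2 (card_filter_chordClosed_le C b)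
  have hchoose : (n.choose b * n.choose b : ℝ) ≤ (2 * n).choose (2 * b) := by
    exact_mod_cast choose_mul_self_le n b
  rw [le_div_iff₀' hpos]
  refine le_of_mul_le_mul_left ?_ hpos
  rw [← mul_assoc, mul_one]
  exact (mul_le_mul_of_nonneg_right hchoose (prob_nonneg _)).trans hdouble

theorem choose_le_choose_of_le_of_add_le {n r b : ℕ} (hr : r ≤ b) (hb : b + r ≤ n) :
    n.choose r ≤ n.choose b := by
  have hhalf {c : ℕ} (hr : r ≤ c) (hc : 2 * c ≤ n) : n.choose r ≤ n.choose c := by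
    induction c, hr using Nat.le_induction with
    | base => exact le_rfl
    | succ c _ ih => exact (ih (by omega)).trans (Nat.choose_le_succ_of_lt_half_left (by omega))
  rcases le_total (2 * b) n with h | h
  · exact hhalf hr h
  · rw [← Nat.choose_symm (show b ≤ n by omega)]
    exact hhalf (by omega) (by omega)

theorem one_div_choose_le {n r : ℕ} (hr : 2 * r ≤ n) :
    1 / (n.choose r : ℝ) ≤ 2 ^ r * r.factorial / n ^ r := by
  rcases r.eq_zero_or_pos with rfl | hr0
  · simp
  have hn : (0 : ℝ) < n := by exact_mod_cast (by omega : 0 < n)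
  have hpow : (n / 2 : ℝ) ^ r / r.factorial ≤ n.choose r := by
    refine le_trans ?_ (Nat.pow_le_choose r n)
    have : (n : ℝ) ≤ 2 * (n + 1 - r : ℕ) := by exact_mod_cast (by omega : n ≤ 2 * (n + 1 - r))
    gcongr
    linarith
  calc 1 / (n.choose r : ℝ) ≤ 1 / ((n / 2 : ℝ) ^ r / r.factorial) :=
        one_div_le_one_div_of_le (by positivity) hpow
    _ = 2 ^ r * r.factorial / n ^ r := by rw [div_pow, one_div_div, div_div_eq_mul_div, mul_comm]

theorem prob_chordClosed_le_of_card {r : ℕ} {B : Finset (Fin (2 * n))} (hlow : 2 * r < #B + 2)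
    (hupp : #B + 2 * r ≤ 2 * n) : prob n (ChordClosed · B) ≤ 2 ^ r * r.factorial / n ^ r := by
  by_cases hex : ∃ C : ChordDiagram n, ChordClosed C B
  · obtain ⟨C, hC⟩ := hex
    obtain ⟨b, hb⟩ : ∃ b, #B = 2 * b := ⟨_, (ChordDiagram.two_mul_card_filter_lt hC).symm⟩
    have hpos : 0 < n.choose r := Nat.choose_pos (by omega)
    calc prob n (ChordClosed · B) ≤ 1 / n.choose b := prob_chordClosed_le hb
      _ ≤ 1 / n.choose r := by
          gcongr
          exact choose_le_choose_of_le_of_add_le (by omega) (by omega)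
      _ ≤ 2 ^ r * r.factorial / n ^ r := one_div_choose_le (by omega)
  · have : prob n (ChordClosed · B) = 0 := by
      simp only [prob, not_exists.1 hex, filter_false, card_empty, Nat.cast_zero, zero_div]
    rw [this]
    positivity

theorem prob_exists_chordClosed_le {r : ℕ} {c : ℝ} {𝓑 : Finset (Finset (Fin (2 * n)))}
    (hcard : #𝓑 ≤ c * n ^ r)
    (hsize : ∀ B ∈ 𝓑, 2 * r < #B ∧ #B + 2 * (r + 1) ≤ 2 * n) :
    prob n (fun C => ∃ B ∈ 𝓑, ChordClosed C B) ≤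
      c * (2 ^ (r + 1) * (r + 1).factorial) / n := by
  calc prob n (fun C => ∃ B ∈ 𝓑, ChordClosed C B)
      ≤ #𝓑 * (2 ^ (r + 1) * (r + 1).factorial / n ^ (r + 1)) :=
        prob_exists_mem_le 𝓑 (fun B C => ChordClosed C B) fun B hB =>
          prob_chordClosed_le_of_card (by have := hsize B hB; omega) (hsize B hB).2
    _ ≤ c * n ^ r * (2 ^ (r + 1) * (r + 1).factorial / n ^ (r + 1)) := by gcongr
    _ = c * (2 ^ (r + 1) * (r + 1).factorial) / n := by
        rcases n.eq_zero_or_pos with rfl | hn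
        · simp
        · field_simp
          ring

end ChordClosed

section NearArcs

variable {n : ℕ}

theorem prob_exists_chordClosed_subset_cwArc_le {L : ℕ} (hn : L + 5 ≤ 2 * n) :
    prob n (fun C => ∃ B, 3 ≤ #B ∧ (∃ y, B ⊆ cwArc y L) ∧ ChordClosed C B) ≤ 2 ^ (L + 5) / n := by
  set 𝓑 : Finset (Finset (Fin (2 * n))) := {B | 3 ≤ #B ∧ ∃ y, B ⊆ cwArc y L} with h𝓑
  have hsub : 𝓑 ⊆ univ.biUnion fun y => (cwArc y L).powerset := fun B hB => by
    simpa [h𝓑] using (mem_filter.1 hB).2.2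
  have hcard : (#𝓑 : ℝ) ≤ 2 ^ (L + 2) * n ^ 1 := by
    have := (card_le_card hsub).trans (card_biUnion_le_card_mul _ _ (2 ^ (L + 1)) fun y _ => by
      rw [card_powerset, card_cwArc y (by omega)])
    rw [card_univ, Fintype.card_fin] at this
    calc (#𝓑 : ℝ) ≤ 2 * n * 2 ^ (L + 1) := by exact_mod_cast this
      _ = 2 ^ (L + 2) * n ^ 1 := by ring
  have hsize : ∀ B ∈ 𝓑, 2 * 1 < #B ∧ #B + 2 * (1 + 1) ≤ 2 * n := fun B hB => by
    obtain ⟨h3, y, hy⟩ := (mem_filter.1 hB).2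
    have := card_le_card hy
    rw [card_cwArc y (by omega)] at this
    omega
  convert prob_exists_chordClosed_le hcard hsize using 1
  · simp [h𝓑, and_assoc]
  · norm_num [Nat.factorial, pow_succ]
    ring

theorem card_filter_card_lt_le (α : Type*) [Fintype α] [Nonempty α] (m : ℕ) :
    #{T : Finset α | #T < m} ≤ m * Fintype.card α ^ m := by
  have hsub : ({T | #T < m} : Finset (Finset α)) ⊆
      (range m).biUnion fun j => powersetCard j univ := fun T hT => by simpa using hT
  refine (card_le_card hsub).trans ?_
  conv_rhs => rw [← card_range m]
  refine card_biUnion_le_card_mul _ _ _ fun j hj => ?_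
  rw [card_powersetCard, card_univ]
  exact (Nat.choose_le_pow _ _).trans
    (Nat.pow_le_pow_right Fintype.card_pos (by simpa using (mem_range.1 hj).le))

theorem card_le_of_forall_eq_cwArc_sdiff {N : ℕ} [NeZero N] {m : ℕ} {𝓑 : Finset (Finset (Fin N))}
    (h : ∀ B ∈ 𝓑, ∃ y, ∃ ℓ < N, ∃ T, #T < m ∧ cwArc y ℓ \ T = B) :
    #𝓑 ≤ m * N ^ (m + 2) := by
  let S : Finset ((Fin N × ℕ) × Finset (Fin N)) :=
    (univ ×ˢ range N) ×ˢ ({T | #T < m} : Finset (Finset (Fin N)))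
  have hsub : 𝓑 ⊆ S.image fun p => cwArc p.1.1 p.1.2 \ p.2 := fun B hB => by
    obtain ⟨y, ℓ, hℓ, T, hT, rfl⟩ := h B hB
    exact mem_image.2 ⟨((y, ℓ), T), by simp [S, hℓ, hT], rfl⟩
  have hT := card_filter_card_lt_le (Fin N) m
  rw [Fintype.card_fin] at hT
  calc #𝓑 ≤ #S := (card_le_card hsub).trans card_image_le
    _ = N * N * #{T : Finset (Fin N) | #T < m} := by simp [S, card_product]
    _ ≤ N * N * (m * N ^ m) := Nat.mul_le_mul_left _ hT
    _ = m * N ^ (m + 2) := by ring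

theorem prob_exists_chordClosed_cwArc_sdiff_le [NeZero n] (m : ℕ) :
    prob n (fun C => ∃ B, (∃ y ℓ, 3 * m + 3 ≤ ℓ ∧ ℓ + 2 * m + 7 ≤ 2 * n ∧ B ⊆ cwArc y ℓ ∧
      #(cwArc y ℓ \ B) < m) ∧ ChordClosed C B) ≤
      m * 2 ^ (m + 2) * (2 ^ (m + 3) * (m + 3).factorial) / n := by
  set 𝓑 : Finset (Finset (Fin (2 * n))) := {B | ∃ y ℓ, 3 * m + 3 ≤ ℓ ∧ ℓ + 2 * m + 7 ≤ 2 * n ∧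
    B ⊆ cwArc y ℓ ∧ #(cwArc y ℓ \ B) < m} with h𝓑
  have hcard : (#𝓑 : ℝ) ≤ m * 2 ^ (m + 2) * n ^ (m + 2) := by
    rw [mul_assoc, ← mul_pow]
    refine mod_cast card_le_of_forall_eq_cwArc_sdiff fun B hB => ?_
    obtain ⟨y, ℓ, -, hℓ, harc, hmiss⟩ := (mem_filter.1 hB).2
    exact ⟨y, ℓ, by omega, _, hmiss, Finset.sdiff_sdiff_eq_self harc⟩
  have hsize : ∀ B ∈ 𝓑, 2 * (m + 2) < #B ∧ #B + 2 * (m + 2 + 1) ≤ 2 * n := fun B hB => by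
    obtain ⟨y, ℓ, hlow, hupp, harc, hmiss⟩ := (mem_filter.1 hB).2
    have := card_sdiff_add_card_eq_card harc
    rw [card_cwArc y (by omega)] at this
    omega
  have hbound := prob_exists_chordClosed_le hcard hsize
  simpa only [h𝓑, mem_filter, mem_univ, true_and] using hbound

/-- The constant in the bound of order `1 / n` on the probability that some near arc is closed. -/
def nearArcConst (k : ℕ) : ℝ :=
  2 ^ (9 * k + 7) + (3 * k : ℕ) * 2 ^ (3 * k + 2) * (2 ^ (3 * k + 3) * (3 * k + 3).factorial)

/-- Short and long arcs need separate bounds: there are about `n ^ (3k)` near arcs in all, too many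
for the probability `O(n⁻²)` that a given set of four endpoints is closed. -/
theorem prob_exists_nearArcs_le {k : ℕ} (hn : 8 * k + 7 ≤ n) :
    prob n (fun C => ∃ B ∈ nearArcs n k, ChordClosed C B) ≤ nearArcConst k / n := by
  have : NeZero n := ⟨by omega⟩
  rw [nearArcConst, add_div]
  refine le_trans ((prob_mono ?_).trans (prob_or_le _ _)) (add_le_add
    (prob_exists_chordClosed_subset_cwArc_le (L := 9 * k + 2) (by omega))
    (prob_exists_chordClosed_cwArc_sdiff_le (3 * k)))
  rintro C ⟨B, hB, hclosed⟩
  obtain ⟨y, ℓ, hlow, hupp, harc, hmiss⟩ := (mem_filter.1 hB).2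
  rcases le_or_gt ℓ (9 * k + 2) with hℓ | hℓ
  · have := card_sdiff_add_card_eq_card harc
    rw [card_cwArc y (by omega)] at this
    refine Or.inl ⟨B, by omega, ⟨y, fun u hu => ?_⟩, hclosed⟩
    exact mem_cwArc.2 ((mem_cwArc.1 (harc hu)).trans hℓ)
  · exact Or.inr ⟨B, ⟨y, ℓ, by omega, by omega, harc, hmiss⟩, hclosed⟩

end NearArcs

namespace ChordDiagram

variable {n k : ℕ}

/-- The chord diagram obtained from `C` by exchanging the roles of `y` and of the partner of `x`:
`x` is joined to `y`, and their former partners are joined to each other. -/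
def switch (x y : Fin (2 * n)) (C : ChordDiagram n) : ChordDiagram n :=
  conj (Equiv.swap (C.1 x) y) C

theorem switch_apply_left {x y : Fin (2 * n)} (hxy : x ≠ y) (C : ChordDiagram n) :
    (switch x y C).1 x = y := by
  rw [switch, conj_apply, Equiv.symm_swap, Equiv.swap_apply_of_ne_of_ne (C.apply_ne x).symm hxy,
    Equiv.swap_apply_left]

theorem switch_apply_apply_left {x y : Fin (2 * n)} (hxy : x ≠ y) (C : ChordDiagram n) :
    (switch x y C).1 (C.1 x) = C.1 y := by
  rw [switch, conj_apply, Equiv.symm_swap, Equiv.swap_apply_left, Equiv.swap_apply_of_ne_of_ne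
    (C.involutive.injective.ne hxy.symm) (C.apply_ne y)]

theorem switch_apply_of_ne {C : ChordDiagram n} {x y z : Fin (2 * n)} (hx : z ≠ x) (hy : z ≠ y)
    (hCx : z ≠ C.1 x) (hCy : z ≠ C.1 y) : (switch x y C).1 z = C.1 z := by
  rw [switch, conj_apply, Equiv.symm_swap, Equiv.swap_apply_of_ne_of_ne hCx hy,
    Equiv.swap_apply_of_ne_of_ne (C.involutive.injective.ne hx)]
  rwa [ne_eq, C.involutive.eq_iff]

theorem prob_switch {x y : Fin (2 * n)} (hxy : x ≠ y) (E : ChordDiagram n → Prop) :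
    prob n (fun C => E (switch x y C)) = (2 * n - 1) * prob n (fun C => C.1 x = y ∧ E C) := by
  have hpartner (G : ChordDiagram n → Prop) :
      prob n G = ∑ c ∈ univ.erase x, prob n (fun C => C.1 x = c ∧ G C) := by
    rw [sum_prob, prob_eq_expect]
    refine expect_congr rfl fun C _ => ?_
    by_cases hG : G C
    · simp [hG, card_filter, C.apply_ne x]
    · simp [hG]
  have hconj : ∀ c ∈ univ.erase x, prob n (fun C => C.1 x = c ∧ E (switch x y C)) =
      prob n (fun C => C.1 x = y ∧ E C) := fun c hc => by
    rw [← prob_conj (Equiv.swap c y) fun C => C.1 x = y ∧ E C]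
    congr 1
    ext C
    rw [conj_apply, Equiv.symm_swap,
      Equiv.swap_apply_of_ne_of_ne (ne_of_mem_erase hc).symm hxy, Equiv.swap_apply_eq_iff,
      Equiv.swap_apply_right]
    exact and_congr_right fun h => by rw [switch, h]
  have hn : 1 ≤ 2 * n := Nat.one_le_of_lt x.isLt
  rw [hpartner, sum_congr rfl hconj, sum_const, card_erase_of_mem (mem_univ x), card_univ,
    Fintype.card_fin, nsmul_eq_mul]
  push_cast [hn]
  rfl

theorem prob_apply_eq_le {x y : Fin (2 * n)} (hxy : x ≠ y) :
    prob n (fun C => C.1 x = y) ≤ 1 / n := by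
  have hle := prob_chordClosed_le (b := 1) (card_pair hxy)
  rw [Nat.choose_one_right] at hle
  refine (prob_mono fun C hC z hz => ?_).trans hle
  have hCy : C.1 y = x := by rw [← hC, apply_apply]
  rcases mem_insert.1 hz with rfl | hz
  · simp [hC]
  · simp [mem_singleton.1 hz, hCy]

theorem shortCount_switch {C : ChordDiagram n} {x y : Fin (2 * n)} (hk : k < n)
    (hpos : 0 < cwDist x y) (hle : cwDist x y ≤ k) (hx : x ∈ lenAtLeast n k C)
    (hy : y ∈ lenAtLeast n k C) (hxy : k < cwDist (C.1 x) (C.1 y))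
    (hyx : k < cwDist (C.1 y) (C.1 x)) :
    shortCount n k (switch x y C) = shortCount n k C + 1 := by
  rw [mem_lenAtLeast] at hx hy
  have hne : x ≠ y := by
    rintro rfl
    exact hpos.ne' (cwDist_self x)
  have happly_x := switch_apply_left hne C
  have happly_Cx := switch_apply_apply_left hne C
  have happly_y : (switch x y C).1 y = x := ((switch x y C).involutive.eq_iff.1 happly_x).symm
  have happly_Cy : (switch x y C).1 (C.1 y) = C.1 x :=
    ((switch x y C).involutive.eq_iff.1 happly_Cx).symm
  have hlong : k < cwDist y x := by
    have := cwDist_add_cwDist hne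
    omega
  rw [shortCount_eq_card _ hk, shortCount_eq_card _ hk,
    ← card_insert_of_notMem (a := x) (by simpa using hx.1)]
  congr 1
  ext z
  simp only [mem_filter, mem_univ, true_and, mem_insert]
  rcases eq_or_ne z x with rfl | hzx
  · simp [happly_x, hle]
  simp only [hzx, false_or]
  rcases eq_or_ne z y with rfl | hzy
  · simp only [happly_y, hlong.not_ge, hy.1.not_ge]
  rcases eq_or_ne z (C.1 x) with rfl | hzCx
  · simp only [happly_Cx, apply_apply, hxy.not_ge, hx.2.not_ge]
  rcases eq_or_ne z (C.1 y) with rfl | hzCy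
  · simp only [happly_Cy, apply_apply, hyx.not_ge, hy.2.not_ge]
  rw [switch_apply_of_ne hzx hzy hzCx hzCy]

end ChordDiagram

section ShortCount

variable {n k : ℕ}

/-- The possible chords of length less than `k`, as pairs of endpoints in clockwise order. -/
def shortPairs (n k : ℕ) : Finset (Fin (2 * n) × Fin (2 * n)) :=
  {p | 0 < cwDist p.1 p.2 ∧ cwDist p.1 p.2 ≤ k}

theorem mem_shortPairs {p : Fin (2 * n) × Fin (2 * n)} :
    p ∈ shortPairs n k ↔ 0 < cwDist p.1 p.2 ∧ cwDist p.1 p.2 ≤ k := by simp [shortPairs]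

theorem fst_ne_snd_of_mem_shortPairs {p : Fin (2 * n) × Fin (2 * n)} (hp : p ∈ shortPairs n k) :
    p.1 ≠ p.2 := fun h => by simp [mem_shortPairs, h] at hp

theorem card_shortPairs (hk : k < 2 * n) : #(shortPairs n k) = 2 * n * k := by
  have hfiber (x : Fin (2 * n)) : #{y | 0 < cwDist x y ∧ cwDist x y ≤ k} = k := by
    have hIoc : Ioc 0 k ⊆ range (2 * n) := fun j hj =>
      mem_range.2 ((mem_Ioc.1 hj).2.trans_lt hk)
    simpa using card_filter_cwDist_mem x hIoc
  rw [shortPairs, card_filter, Fintype.sum_prod_type]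
  simp only [← card_filter, hfiber, sum_const, card_univ, Fintype.card_fin, smul_eq_mul]

theorem card_filter_shortPairs (C : ChordDiagram n) (hk : k < n) :
    #{p ∈ shortPairs n k | C.1 p.1 = p.2} = shortCount n k C := by
  rw [C.shortCount_eq_card hk]
  refine card_nbij' Prod.fst (fun x => (x, C.1 x)) ?_ ?_ ?_ ?_
  · rintro ⟨x, y⟩ hp
    obtain ⟨hp, hC⟩ := mem_filter.1 (mem_coe.1 hp)
    simpa [hC] using (mem_shortPairs.1 hp).2
  · intro x hx
    simpa [mem_shortPairs, cwDist_pos (C.apply_ne x).symm] using hx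
  · rintro ⟨x, y⟩ hp
    exact Prod.ext rfl (mem_filter.1 (mem_coe.1 hp)).2
  · exact fun _ _ => rfl

theorem sum_prob_apply_eq_and (hk : k < n) (E : ChordDiagram n → Prop) [DecidablePred E] :
    ∑ p ∈ shortPairs n k, prob n (fun C => C.1 p.1 = p.2 ∧ E C) =
      𝔼 C : ChordDiagram n, if E C then (shortCount n k C : ℝ) else 0 := by
  rw [sum_prob]
  refine expect_congr rfl fun C _ => ?_
  split_ifs with hE
  · simp only [hE, and_true, card_filter_shortPairs C hk]
  · simp [hE]

theorem prob_notMem_lenAtLeast_le (hk : k < n) (x : Fin (2 * n)) :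
    prob n (fun C => x ∉ lenAtLeast n k C) ≤ 2 * k / n := by
  let s := Ioc 0 k ∪ Ico (2 * n - k) (2 * n)
  have hs : s ⊆ range (2 * n) := fun j hj => by
    simp only [s, mem_union, mem_Ioc, mem_Ico] at hj
    exact mem_range.2 (by omega)
  have hcard : (#{c | cwDist x c ∈ s} : ℝ) ≤ 2 * k := by
    have : #s ≤ 2 * k := (card_union_le _ _).trans_eq (by
      rw [Nat.card_Ioc, Nat.card_Ico]
      omega)
    rw [card_filter_cwDist_mem x hs]
    exact_mod_cast this
  calc prob n (fun C => x ∉ lenAtLeast n k C)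
      ≤ prob n (fun C => ∃ c ∈ ({c | cwDist x c ∈ s} : Finset (Fin (2 * n))), C.1 x = c) := by
        refine prob_mono fun C hC => ⟨C.1 x, ?_, rfl⟩
        have := cwDist_pos (C.apply_ne x).symm
        have := cwDist_add_cwDist (C.apply_ne x)
        have := cwDist_lt x (C.1 x)
        rw [C.mem_lenAtLeast] at hC
        simp only [s, mem_filter, mem_univ, true_and, mem_union, mem_Ioc, mem_Ico]
        omega
    _ ≤ #{c | cwDist x c ∈ s} * (1 / n) := by
        refine prob_exists_mem_le _ _ fun c hc => ChordDiagram.prob_apply_eq_le ?_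
        rintro rfl
        simp only [s, mem_filter, mem_univ, true_and, cwDist_self, mem_union, mem_Ioc, mem_Ico]
          at hc
        omega
    _ ≤ 2 * k * (1 / n) := by gcongr
    _ = 2 * k / n := mul_one_div _ _

theorem prob_cwDist_apply_le (hk : k < n) (hn : 4 ≤ n) {x y : Fin (2 * n)} (hxy : x ≠ y) :
    prob n (fun C => C.1 x ≠ y ∧ (cwDist (C.1 x) (C.1 y) ≤ k ∨ cwDist (C.1 y) (C.1 x) ≤ k)) ≤
      16 * k / n := by
  let 𝓑 : Finset (Finset (Fin (2 * n))) :=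
    {B ∈ (shortPairs n k).image fun p => {x, y, p.1, p.2} | 3 ≤ #B}
  have hcard : (#𝓑 : ℝ) ≤ 2 * k * n ^ 1 := by
    have : #𝓑 ≤ 2 * n * k :=
      (card_filter_le _ _).trans (card_image_le.trans_eq (card_shortPairs (by omega)))
    calc (#𝓑 : ℝ) ≤ 2 * n * k := by exact_mod_cast this
      _ = 2 * k * n ^ 1 := by ring
  have hsize : ∀ B ∈ 𝓑, 2 * 1 < #B ∧ #B + 2 * (1 + 1) ≤ 2 * n := fun B hB => by
    obtain ⟨hB, h3⟩ := mem_filter.1 hB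
    obtain ⟨p, -, rfl⟩ := mem_image.1 hB
    have := card_le_four (a := x) (b := y) (c := p.1) (d := p.2)
    omega
  calc _ ≤ prob n (fun C => ∃ B ∈ 𝓑, ChordClosed C B) := by
        refine prob_mono fun C hC => ?_
        have hne := C.involutive.injective.ne hxy
        have hpos := cwDist_pos hne
        have hpos' := cwDist_pos hne.symm
        have h3 : 3 ≤ #{x, y, C.1 x, C.1 y} := by
          rw [← card_eq_three.2 ⟨x, y, C.1 x, hxy, (C.apply_ne x).symm, hC.1.symm, rfl⟩]
          exact card_le_card (by grind)
        refine ⟨{x, y, C.1 x, C.1 y}, mem_filter.2 ⟨mem_image.2 ?_, h3⟩, ?_⟩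
        · rcases hC.2 with h | h
          · exact ⟨(C.1 x, C.1 y), mem_shortPairs.2 ⟨hpos, h⟩, rfl⟩
          · exact ⟨(C.1 y, C.1 x), mem_shortPairs.2 ⟨hpos', h⟩, by grind⟩
        · intro z hz
          simp only [mem_insert, mem_singleton] at hz ⊢
          rcases hz with rfl | rfl | rfl | rfl <;> simp
    _ ≤ 2 * k * (2 ^ (1 + 1) * (1 + 1).factorial) / n := prob_exists_chordClosed_le hcard hsize
    _ = 16 * k / n := by
        norm_num [Nat.factorial]
        ring

theorem abs_prob_shortCount_switch_sub_le (hk : k < n) (hn : 4 ≤ n)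
    {p : Fin (2 * n) × Fin (2 * n)} (hp : p ∈ shortPairs n k) (m : ℕ) :
    |prob n (fun C => shortCount n k (C.switch p.1 p.2) = m + 1) -
      prob n (fun C => shortCount n k C = m)| ≤ 20 * k / n := by
  have hne := fst_ne_snd_of_mem_shortPairs hp
  obtain ⟨hpos, hle⟩ := mem_shortPairs.1 hp
  calc _ ≤ prob n (fun C => (p.1 ∉ lenAtLeast n k C ∨ p.2 ∉ lenAtLeast n k C) ∨
        (C.1 p.1 ≠ p.2 ∧
          (cwDist (C.1 p.1) (C.1 p.2) ≤ k ∨ cwDist (C.1 p.2) (C.1 p.1) ≤ k))) := by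
        refine abs_prob_sub_prob_le fun C hC => ?_
        simp only [not_or, not_not, not_and, not_le] at hC
        obtain ⟨⟨hx, hy⟩, hC⟩ := hC
        have hpartner : C.1 p.1 ≠ p.2 := fun h => by
          rw [C.mem_lenAtLeast, h] at hx
          omega
        rw [C.shortCount_switch hk hpos hle hx hy (hC hpartner).1 (hC hpartner).2,
          Nat.add_right_cancel_iff]
    _ ≤ 2 * k / n + 2 * k / n + 16 * k / n := by
        refine (prob_or_le _ _).trans (add_le_add ((prob_or_le _ _).trans (add_le_add ?_ ?_)) ?_)
        · exact prob_notMem_lenAtLeast_le hk _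
        · exact prob_notMem_lenAtLeast_le hk _
        · exact prob_cwDist_apply_le hk hn hne
    _ = 20 * k / n := by ring

theorem sum_prob_shortCount_switch_eq (hk : k < n) (m : ℕ) :
    ∑ p ∈ shortPairs n k, prob n (fun C => shortCount n k (C.switch p.1 p.2) = m + 1) =
      (2 * n - 1) * ((m + 1) * prob n fun C => shortCount n k C = m + 1) := by
  rw [sum_congr rfl fun p hp => ChordDiagram.prob_switch (fst_ne_snd_of_mem_shortPairs hp)
    (fun C => shortCount n k C = m + 1), ← mul_sum, sum_prob_apply_eq_and hk]
  congr 1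
  rw [prob_eq_expect, mul_expect]
  refine expect_congr rfl fun C _ => ?_
  split_ifs with h <;> simp [h]

theorem abs_succ_mul_prob_shortCount_sub_le (hk : k < n) (hn : 4 ≤ n) (m : ℕ) :
    |(m + 1) * prob n (fun C => shortCount n k C = m + 1) -
      k * prob n (fun C => shortCount n k C = m)| ≤ (40 * k ^ 2 + k) / n := by
  set P := prob n fun C => shortCount n k C = m
  set Q := prob n fun C => shortCount n k C = m + 1
  have hn0 : (4 : ℝ) ≤ n := by exact_mod_cast hn
  have hcard : (#(shortPairs n k) : ℝ) = 2 * n * k := by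
    exact_mod_cast card_shortPairs (by omega : k < 2 * n)
  have hswitch : |(2 * n - 1) * ((m + 1) * Q) - 2 * n * k * P| ≤ 40 * k ^ 2 := by
    calc _ = |∑ p ∈ shortPairs n k,
          (prob n (fun C => shortCount n k (C.switch p.1 p.2) = m + 1) - P)| := by
          rw [sum_sub_distrib, sum_prob_shortCount_switch_eq hk, sum_const, nsmul_eq_mul, hcard]
      _ ≤ #(shortPairs n k) * (20 * k / n) := by
          rw [← nsmul_eq_mul]
          exact (abs_sum_le_sum_abs _ _).trans (sum_le_card_nsmul _ _ _ fun p hp =>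
            abs_prob_shortCount_switch_sub_le hk hn hp m)
      _ = 40 * k ^ 2 := by
          rw [hcard]
          field_simp
          ring
  have hP : |k * P| ≤ k := by
    rw [abs_of_nonneg (mul_nonneg k.cast_nonneg (prob_nonneg _))]
    exact mul_le_of_le_one_right k.cast_nonneg (prob_le_one _)
  have hsplit : (2 * n - 1) * ((m + 1) * Q - k * P) =
      ((2 * n - 1) * ((m + 1) * Q) - 2 * n * k * P) + k * P := by ring
  rw [le_div_iff₀' (by linarith)]
  calc n * |(m + 1) * Q - k * P| ≤ (2 * n - 1) * |(m + 1) * Q - k * P| := by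
        gcongr
        linarith
    _ = |((2 * n - 1) * ((m + 1) * Q) - 2 * n * k * P) + k * P| := by
        rw [← hsplit, abs_mul, abs_of_nonneg (by linarith : (0 : ℝ) ≤ 2 * n - 1)]
    _ ≤ 40 * k ^ 2 + k := (abs_add_le _ _).trans (add_le_add hswitch hP)

theorem prob_lt_shortCount_le (hk : k < n) (M : ℕ) :
    prob n (fun C => M < shortCount n k C) ≤ 2 * k / (M + 1) := by
  have hn : (n : ℝ) ≠ 0 := by exact_mod_cast (by omega : n ≠ 0)
  rw [le_div_iff₀' (by positivity)]
  calc (M + 1) * prob n (fun C => M < shortCount n k C)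
      ≤ 𝔼 C : ChordDiagram n, if M < shortCount n k C then (shortCount n k C : ℝ) else 0 := by
        rw [prob_eq_expect, mul_expect]
        refine expect_le_expect fun C _ => ?_
        split_ifs with h
        · rw [mul_one]
          exact_mod_cast Nat.succ_le_of_lt h
        · rw [mul_zero]
    _ = ∑ p ∈ shortPairs n k, prob n (fun C => C.1 p.1 = p.2 ∧ M < shortCount n k C) :=
        (sum_prob_apply_eq_and hk fun C => M < shortCount n k C).symm
    _ ≤ #(shortPairs n k) • (1 / n : ℝ) := sum_le_card_nsmul _ _ _ fun _ hp =>
        (prob_mono fun _ hC => hC.1).trans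
          (ChordDiagram.prob_apply_eq_le (fst_ne_snd_of_mem_shortPairs hp))
    _ = 2 * k := by
        rw [card_shortPairs (by omega), nsmul_eq_mul]
        push_cast
        field_simp

theorem sum_prob_shortCount_eq_add (n k M : ℕ) :
    ∑ m ∈ range (M + 1), prob n (fun C => shortCount n k C = m) +
      prob n (fun C => M < shortCount n k C) = 1 := by
  rw [sum_prob, prob_eq_expect, ← expect_add_distrib]
  refine (expect_congr rfl fun C _ => ?_).trans (Fintype.expect_one (ι := ChordDiagram n))
  rcases lt_or_ge M (shortCount n k C) with h | h
  · simp [h, card_filter]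
  · simp [h.not_gt, card_filter, Nat.lt_succ_of_le h]

end ShortCount

section PoissonLimit

open Topology

variable {ι : Type*} {l : Filter ι} {p : ι → ℕ → ℝ} {r : ℝ}

theorem tendsto_of_forall_eventually_abs_sub_le {f : ι → ℝ} {a : ℝ} {g : ℕ → ι → ℝ} {c : ℕ → ℝ}
    (hg : ∀ M, Tendsto (g M) l (𝓝 0)) (hc : Tendsto c atTop (𝓝 0))
    (h : ∀ M, ∀ᶠ i in l, |f i - a| ≤ |g M i| + c M) : Tendsto f l (𝓝 a) := by
  refine Metric.tendsto_nhds.2 fun ε hε => ?_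
  obtain ⟨M, hM⟩ := (hc.eventually_lt_const (half_pos hε)).exists
  filter_upwards [h M, Metric.tendsto_nhds.1 (hg M) (ε / 2) (half_pos hε)] with i hi hgi
  rw [Real.dist_0_eq_abs] at hgi
  rw [Real.dist_eq]
  linarith

theorem tendsto_sub_pow_div_factorial_mul
    (hrec : ∀ m : ℕ, Tendsto (fun i => (m + 1) * p i (m + 1) - r * p i m) l (𝓝 0)) (m : ℕ) :
    Tendsto (fun i => p i m - r ^ m / m.factorial * p i 0) l (𝓝 0) := by
  induction m with
  | zero => simpa using tendsto_const_nhds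
  | succ m ih =>
    have h := ((hrec m).const_mul (1 / (m + 1 : ℝ))).add (ih.const_mul (r / (m + 1)))
    simp only [mul_zero, add_zero] at h
    refine h.congr fun i => ?_
    rw [Nat.factorial_succ]
    push_cast
    field_simp
    ring

theorem tendsto_apply_zero_mul_exp {b : ℕ → ℝ} {K : ℝ} (hbdd : ∀ i, |p i 0| ≤ K)
    (hrec : ∀ m : ℕ, Tendsto (fun i => (m + 1) * p i (m + 1) - r * p i m) l (𝓝 0))
    (hb : Tendsto b atTop (𝓝 0))
    (htail : ∀ M, ∀ᶠ i in l, |∑ m ∈ range (M + 1), p i m - 1| ≤ b M) :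
    Tendsto (fun i => p i 0 * Real.exp r) l (𝓝 1) := by
  let s (M : ℕ) : ℝ := ∑ m ∈ range (M + 1), r ^ m / m.factorial
  have hs : Tendsto s atTop (𝓝 (Real.exp r)) := by
    rw [Real.exp_eq_exp_ℝ]
    exact (NormedSpace.expSeries_div_hasSum_exp r).tendsto_sum_nat.comp (tendsto_add_atTop_nat 1)
  have hg (M : ℕ) : Tendsto (fun i => ∑ m ∈ range (M + 1), p i m - s M * p i 0) l (𝓝 0) := by
    simpa only [s, sum_sub_distrib, sum_mul, sum_const_zero] using
      tendsto_finsetSum (range (M + 1)) fun m _ => tendsto_sub_pow_div_factorial_mul hrec m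
  have hc : Tendsto (fun M => K * |Real.exp r - s M| + b M) atTop (𝓝 0) := by
    simpa using ((hs.const_sub (Real.exp r)).abs.const_mul K).add hb
  refine tendsto_of_forall_eventually_abs_sub_le hg hc fun M => ?_
  filter_upwards [htail M] with i hi
  have hexp : |p i 0 * (Real.exp r - s M)| ≤ K * |Real.exp r - s M| := by
    rw [abs_mul]
    exact mul_le_mul_of_nonneg_right (hbdd i) (abs_nonneg _)
  have hsplit : p i 0 * Real.exp r - 1 = p i 0 * (Real.exp r - s M) -
      (∑ m ∈ range (M + 1), p i m - s M * p i 0) + (∑ m ∈ range (M + 1), p i m - 1) := by ring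
  rw [hsplit]
  have := abs_add_le (p i 0 * (Real.exp r - s M) - (∑ m ∈ range (M + 1), p i m - s M * p i 0))
    (∑ m ∈ range (M + 1), p i m - 1)
  have := abs_sub (p i 0 * (Real.exp r - s M)) (∑ m ∈ range (M + 1), p i m - s M * p i 0)
  linarith

theorem tendsto_poisson_of_recurrence {b : ℕ → ℝ} {K : ℝ} (hbdd : ∀ i, |p i 0| ≤ K)
    (hrec : ∀ m : ℕ, Tendsto (fun i => (m + 1) * p i (m + 1) - r * p i m) l (𝓝 0))
    (hb : Tendsto b atTop (𝓝 0))
    (htail : ∀ M, ∀ᶠ i in l, |∑ m ∈ range (M + 1), p i m - 1| ≤ b M) (m : ℕ) :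
    Tendsto (fun i => p i m) l (𝓝 (Real.exp (-r) * r ^ m / m.factorial)) := by
  have hzero : Tendsto (fun i => p i 0) l (𝓝 (Real.exp (-r))) := by
    have h := (tendsto_apply_zero_mul_exp hbdd hrec hb htail).mul_const (Real.exp (-r))
    simpa only [one_mul, mul_assoc, ← Real.exp_add, add_neg_cancel, Real.exp_zero, mul_one] using h
  have h := (tendsto_sub_pow_div_factorial_mul hrec m).add
    (hzero.const_mul (r ^ m / m.factorial))
  simpa only [sub_add_cancel, zero_add, mul_comm (Real.exp (-r)), mul_div_right_comm] using h

end PoissonLimit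

section Limits

open Topology

theorem tendsto_prob_shortCount_eq (k m : ℕ) :
    Tendsto (fun n => prob n fun C => shortCount n k C = m) atTop
      (𝓝 (Real.exp (-k) * k ^ m / m.factorial)) := by
  refine tendsto_poisson_of_recurrence (K := 1) (b := fun M => 2 * k / ((M : ℝ) + 1))
    (p := fun n m => prob n fun C => shortCount n k C = m) (fun n => ?_) (fun m => ?_) ?_
    (fun M => ?_) m
  · rw [abs_of_nonneg (prob_nonneg _)]
    exact prob_le_one _
  · refine squeeze_zero_norm' ?_
      (tendsto_const_div_atTop_nhds_zero_nat (40 * (k : ℝ) ^ 2 + k))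
    filter_upwards [eventually_ge_atTop (k + 4)] with n hn
    exact abs_succ_mul_prob_shortCount_sub_le (by omega) (by omega) m
  · exact_mod_cast
      (tendsto_const_div_atTop_nhds_zero_nat (2 * k : ℝ)).comp (tendsto_add_atTop_nat 1)
  · filter_upwards [eventually_gt_atTop k] with n hn
    rw [abs_sub_comm, ← eq_sub_of_add_eq' (sum_prob_shortCount_eq_add n k M),
      abs_of_nonneg (prob_nonneg _)]
    exact prob_lt_shortCount_le hn M

theorem tendsto_prob_kCoreSize_add_shortCount_ne (k : ℕ) :
    Tendsto (fun n => prob n fun C => kCoreSize n k C + shortCount n k C ≠ n) atTop (𝓝 0) := by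
  refine squeeze_zero' (Eventually.of_forall fun n => prob_nonneg _) ?_
    (tendsto_const_div_atTop_nhds_zero_nat (nearArcConst k))
  filter_upwards [eventually_ge_atTop (8 * k + 7)] with n hn
  refine (prob_mono fun C hC => ?_).trans (prob_exists_nearArcs_le hn)
  contrapose! hC
  exact ChordDiagram.kCoreSize_add_shortCount
    (ChordDiagram.isCore_lenAtLeast (by omega) hC)

end Limits

theorem stmt6 (k : ℕ) (hk : 1 ≤ k) (m : ℕ) :
    Filter.Tendsto
      (fun n : ℕ => prob n (fun C => n - kCoreSize n k C = m))
      Filter.atTop (nhds (Real.exp (-(k:ℝ)) * (k:ℝ)^m / (m.factorial : ℝ))) := by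
  have hshort := tendsto_prob_shortCount_eq k m
  have hdiff : Filter.Tendsto (fun n => prob n (fun C => n - kCoreSize n k C = m) -
      prob n fun C => shortCount n k C = m) Filter.atTop (nhds 0) := by
    refine squeeze_zero_norm (fun n => ?_) (tendsto_prob_kCoreSize_add_shortCount_ne k)
    exact abs_prob_sub_prob_le fun C hC => by omega
  simpa only [sub_add_cancel, zero_add] using hdiff.add hshort
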